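/- Let Q_n denote the zonotope [−1,1]^{n−1} + [0, (1,…,1)] ⊂ ℝ^{n−1} (Minkowski sum of the (n−1)-cube with the segment from 0 to the all-ones vector). Then the f-vector of Q_n satisfies the recursion f_{Q_n,0} = f_{□_{n−1},0} + f_{Q_{n−1},0} and f_{Q_n,i} = f_{□_{n−1},i} + f_{Q_{n−1},i} + f_{Q_{n−1},i−1} for i ∈ {1,…,n−2}, where □_{n−1} = [−1,1]^{n−1} and f_{P,i} is the number of i-faces of P. -/

import Mathlib

/-!
The face of a zonotope `p + ∑ j, [-1, 1] • v j` on which a linear functional `c` is maximal is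
determined by the sign vector `j ↦ sign (c (v j))`, and its direction is spanned by the `v j` with
`c (v j) = 0`. The values `c (v j)` are arbitrary real numbers subject to the linear relations among
the `v j`. The generators of the cube satisfy no relation, so every nonzero sign vector gives a
proper face. Up to scaling, those of `Q_n` satisfy only one relation, and it has positive
coefficients, so the proper faces correspond to the sign vectors with entries of both signs. The
dimension of the face is the number of zeros in either case. The recursion then comes from
splitting off the first entry of a vector with entries of both signs: after a `0` the rest still has
entries of both signs, while after a `±1` it only needs an entry `∓1`; by inclusion-exclusion the
latter two cases together count the nonzero sign vectors once and those with both signs once more.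
-/

open Set Module

/-- A (possibly empty or improper) face of `P`: the set of maximizers of a linear
functional over `P` (at level `α`, an upper bound of the functional on `P`). -/
def IsFace {E : Type*} [AddCommGroup E] [Module ℝ E] (P F : Set E) : Prop :=
  ∃ (c : E →ₗ[ℝ] ℝ) (α : ℝ), (∀ x ∈ P, c x ≤ α) ∧ F = {x ∈ P | c x = α}

/-- The number of nonempty proper faces of `P` of dimension `i`. -/
noncomputable def nF {E : Type*} [AddCommGroup E] [Module ℝ E] (P : Set E) (i : ℕ) : ℕ :=
  Set.ncard {F : Set E | IsFace P F ∧ F ≠ P ∧ F.Nonempty ∧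
    Module.finrank ℝ (vectorSpan ℝ F) = i}

/-- The d-cube `[-1,1]^d`. -/
def cube (d : ℕ) : Set (Fin d → ℝ) := {x | ∀ i, |x i| ≤ 1}

/-- The zonotope `[-1,1]^d + [0, (1,…,1)]`. -/
def zon (d : ℕ) : Set (Fin d → ℝ) :=
  {z | ∃ x ∈ cube d, ∃ t : ℝ, 0 ≤ t ∧ t ≤ 1 ∧ z = x + t • (fun _ => (1 : ℝ) : Fin d → ℝ)}

open scoped Finset

open SignType (sign)

section Signs

variable {R : Type*} [Ring R] [LinearOrder R] [IsStrictOrderedRing R]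

theorem abs_coe_signType_le_one (a : SignType) : |(a : R)| ≤ 1 := by
  cases a <;> simp

theorem sign_coe_signType (a : SignType) : sign (a : R) = a := by
  cases a <;> simp

theorem coe_signType_injective : Function.Injective ((↑) : SignType → R) :=
  Function.LeftInverse.injective sign_coe_signType

theorem mul_le_abs_of_abs_le_one {x : R} (hx : |x| ≤ 1) (a : R) : x * a ≤ |a| :=
  calc x * a ≤ |x| * |a| := (le_abs_self _).trans_eq (abs_mul x a)
    _ ≤ |a| := mul_le_of_le_one_left (abs_nonneg a) hx

theorem mul_eq_abs_iff (x a : R) : x * a = |a| ↔ (sign a ≠ 0 → x = sign a) := by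
  rw [sign_ne_zero, ← sign_mul_self, mul_eq_mul_right_iff]
  tauto

theorem sum_mul_eq_sum_abs_iff {ι : Type*} [Fintype ι] {x a : ι → R} (hx : ∀ j, |x j| ≤ 1) :
    ∑ j, x j * a j = ∑ j, |a j| ↔ ∀ j, sign (a j) ≠ 0 → x j = sign (a j) := by
  rw [Finset.sum_eq_sum_iff_of_le fun j _ => mul_le_abs_of_abs_le_one (hx j) (a j)]
  simp [mul_eq_abs_iff]

end Signs

section LinearAlgebra

theorem exists_dual_apply_eq_iff {K E ι : Type*} [Field K] [AddCommGroup E] [Module K E]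
    [Fintype ι] (v : ι → E) (a : ι → K) :
    (∃ c : Dual K E, ∀ j, c (v j) = a j) ↔
      ∀ x ∈ LinearMap.ker (Fintype.linearCombination K v), ∑ j, x j * a j = 0 := by
  classical
  have range_iff : (∃ c : Dual K E, ∀ j, c (v j) = a j) ↔
      Fintype.linearCombination K a ∈ (Fintype.linearCombination K v).dualMap.range := by
    refine exists_congr fun c => ⟨fun hc => LinearMap.ext fun x => ?_, fun hc j => ?_⟩
    · simp [Fintype.linearCombination_apply, hc]
    · simpa using LinearMap.congr_fun hc (Pi.single j 1)
  rw [range_iff, LinearMap.range_dualMap_eq_dualAnnihilator_ker, Submodule.mem_dualAnnihilator]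
  simp only [Fintype.linearCombination_apply, smul_eq_mul]

theorem finrank_span_image_eq_ncard {R M ι : Type*} [Semiring R] [StrongRankCondition R]
    [AddCommMonoid M] [Module R M] {v : ι → M} {t : Set ι} (h : LinearIndepOn R v t) :
    finrank R (Submodule.span R (v '' t)) = t.ncard := by
  rw [ncard_def, ← toENat_rank_span_set h]
  rfl

end LinearAlgebra

section Zonotope

variable {ι E : Type*} [AddCommGroup E] [Module ℝ E]

/-- The covectors of `v`, in the sense of oriented matroids: the sign vectors of the values on `v`
of a linear functional. -/
def covectors (v : ι → E) : Set (ι → SignType) :=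
  range fun (c : Dual ℝ E) j => sign (c (v j))

theorem zero_mem_covectors (v : ι → E) : 0 ∈ covectors v :=
  ⟨0, by ext; simp⟩

variable [Fintype ι]

/-- The zonotope `p + ∑ j, [-1, 1] • v j` with center `p` and generators `v`. -/
def zonotope (p : E) (v : ι → E) : Set E :=
  {y | ∃ x : ι → ℝ, (∀ j, |x j| ≤ 1) ∧ y = p + ∑ j, x j • v j}

/-- The part of `zonotope p v` in which the coefficient of `v j` is `s j` whenever `s j ≠ 0`.
It is a face only if `s` is a covector of `v`. -/
def signFace (p : E) (v : ι → E) (s : ι → SignType) : Set E :=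
  {y | ∃ x : ι → ℝ, (∀ j, |x j| ≤ 1) ∧ (∀ j, s j ≠ 0 → x j = s j) ∧ y = p + ∑ j, x j • v j}

theorem mem_covectors_iff {v : ι → E} {s : ι → SignType} :
    s ∈ covectors v ↔ ∃ a : ι → ℝ, (∀ j, sign (a j) = s j) ∧
      ∀ x ∈ LinearMap.ker (Fintype.linearCombination ℝ v), ∑ j, x j * a j = 0 := by
  simp only [← exists_dual_apply_eq_iff]
  constructor
  · rintro ⟨c, rfl⟩
    exact ⟨fun j => c (v j), fun _ => rfl, c, fun _ => rfl⟩
  · rintro ⟨a, ha, c, hc⟩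
    exact ⟨c, funext fun j => (congrArg sign (hc j)).trans (ha j)⟩

theorem signFace_zero (p : E) (v : ι → E) : signFace p v 0 = zonotope p v := by
  simp [signFace, zonotope]

theorem center_mem_signFace (p : E) (v : ι → E) (s : ι → SignType) :
    p + ∑ j, (s j : ℝ) • v j ∈ signFace p v s :=
  ⟨fun j => s j, fun j => abs_coe_signType_le_one (s j), fun _ _ => rfl, rfl⟩

theorem map_le_of_mem_zonotope {p : E} {v : ι → E} (c : Dual ℝ E) {y : E}
    (hy : y ∈ zonotope p v) : c y ≤ c p + ∑ j, |c (v j)| := by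
  obtain ⟨x, hx, rfl⟩ := hy
  simpa using Finset.sum_le_sum fun j _ => mul_le_abs_of_abs_le_one (hx j) (c (v j))

theorem signFace_sign_eq_maximizers (p : E) (v : ι → E) (c : Dual ℝ E) :
    signFace p v (fun j => sign (c (v j))) =
      {y ∈ zonotope p v | c y = c p + ∑ j, |c (v j)|} := by
  ext y
  constructor
  · rintro ⟨x, hx, hs, rfl⟩
    exact ⟨⟨x, hx, rfl⟩, by simpa using (sum_mul_eq_sum_abs_iff hx).2 hs⟩
  · rintro ⟨⟨x, hx, rfl⟩, hc⟩
    exact ⟨x, hx, (sum_mul_eq_sum_abs_iff hx).1 (by simpa using hc), rfl⟩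

theorem isFace_zonotope_and_nonempty_iff {p : E} {v : ι → E} {F : Set E} :
    IsFace (zonotope p v) F ∧ F.Nonempty ↔ F ∈ signFace p v '' covectors v := by
  rw [covectors, ← range_comp]
  constructor
  · rintro ⟨⟨c, α, hα, rfl⟩, y, hy, hyα⟩
    refine ⟨c, ?_⟩
    have center_mem := center_mem_signFace p v fun j => sign (c (v j))
    rw [signFace_sign_eq_maximizers] at center_mem
    have α_eq : α = c p + ∑ j, |c (v j)| :=
      le_antisymm (hyα ▸ map_le_of_mem_zonotope c hy) (center_mem.2 ▸ hα _ center_mem.1)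
    rw [α_eq, Function.comp_apply, signFace_sign_eq_maximizers]
  · rintro ⟨c, rfl⟩
    exact ⟨⟨c, _, fun _ => map_le_of_mem_zonotope c, signFace_sign_eq_maximizers p v c⟩,
      _, center_mem_signFace p v _⟩

theorem eq_of_signFace_subset {p : E} {v : ι → E} {s t : ι → SignType} (ht : t ∈ covectors v)
    (h : signFace p v s ⊆ signFace p v t) {j : ι} (hj : t j ≠ 0) : s j = t j := by
  obtain ⟨c, rfl⟩ := ht
  have center_mem := h (center_mem_signFace p v s)
  rw [signFace_sign_eq_maximizers] at center_mem
  have sum_eq : ∑ j, (s j : ℝ) * c (v j) = ∑ j, |c (v j)| := by simpa using center_mem.2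
  exact coe_signType_injective <|
    (sum_mul_eq_sum_abs_iff fun j => abs_coe_signType_le_one (s j)).1 sum_eq j hj

theorem injOn_signFace (p : E) (v : ι → E) : InjOn (signFace p v) (covectors v) := by
  intro s hs t ht h
  funext j
  by_cases hsj : s j = 0
  · by_cases htj : t j = 0
    · rw [hsj, htj]
    · exact eq_of_signFace_subset ht h.subset htj
  · exact (eq_of_signFace_subset hs h.superset hsj).symm

theorem vectorSpan_signFace (p : E) (v : ι → E) (s : ι → SignType) :
    vectorSpan ℝ (signFace p v s) = Submodule.span ℝ (v '' {j | s j = 0}) := by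
  classical
  apply le_antisymm
  · rw [vectorSpan_def, Submodule.span_le]
    rintro _ ⟨_, ⟨x, -, hxs, rfl⟩, _, ⟨y, -, hys, rfl⟩, rfl⟩
    have sub_eq : p + ∑ j, x j • v j -ᵥ (p + ∑ j, y j • v j) = ∑ j, (x j - y j) • v j := by
      simp [sub_smul]
    simp only [sub_eq]
    refine Submodule.sum_mem _ fun j _ => ?_
    by_cases hj : s j = 0
    · exact Submodule.smul_mem _ _ (Submodule.subset_span ⟨j, hj, rfl⟩)
    · simp [hxs j hj, hys j hj]
  · rw [Submodule.span_le]
    rintro _ ⟨j, hj : s j = 0, rfl⟩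
    have center_add_mem : (p + ∑ k, (s k : ℝ) • v k) + v j ∈ signFace p v s := by
      refine ⟨(fun k => (s k : ℝ)) + Pi.single j 1, fun k => ?_, fun k hk => ?_, ?_⟩
      · obtain rfl | hkj := eq_or_ne k j
        · simp [hj]
        · simpa [hkj] using abs_coe_signType_le_one (s k)
      · have hkj : k ≠ j := fun h => hk (h ▸ hj)
        simp [hkj]
      · simp [add_smul, Finset.sum_add_distrib, Pi.single_apply, add_assoc]
    simpa using vsub_mem_vectorSpan ℝ center_add_mem (center_mem_signFace p v s)

theorem nF_zonotope (p : E) (v : ι → E) (i : ℕ) :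
    nF (zonotope p v) i =
      {s ∈ covectors v | s ≠ 0 ∧
        finrank ℝ (Submodule.span ℝ (v '' {j | s j = 0})) = i}.ncard := by
  rw [← ((injOn_signFace p v).mono (sep_subset _ _)).ncard_image, nF]
  have signFace_ne_iff {s : ι → SignType} (hs : s ∈ covectors v) :
      signFace p v s ≠ zonotope p v ↔ s ≠ 0 := by
    rw [← signFace_zero, (injOn_signFace p v).ne_iff hs (zero_mem_covectors v)]
  congr 1
  ext F
  constructor
  · rintro ⟨hF, hne, hF', hdim⟩
    obtain ⟨s, hs, rfl⟩ := isFace_zonotope_and_nonempty_iff.1 ⟨hF, hF'⟩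
    rw [signFace_ne_iff hs] at hne
    rw [vectorSpan_signFace] at hdim
    exact ⟨s, ⟨hs, hne, hdim⟩, rfl⟩
  · rintro ⟨s, ⟨hs, hne, hdim⟩, rfl⟩
    obtain ⟨hF, hF'⟩ := isFace_zonotope_and_nonempty_iff.2 (mem_image_of_mem (signFace p v) hs)
    rw [← signFace_ne_iff hs] at hne
    rw [← vectorSpan_signFace p] at hdim
    exact ⟨hF, hne, hF', hdim⟩

theorem nF_zonotope_eq_card [DecidableEq ι] (p : E) {v : ι → E} (i : ℕ)
    {S : (ι → SignType) → Prop} [DecidablePred S] (hS : ∀ s, s ∈ covectors v ∧ s ≠ 0 ↔ S s)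
    (hli : ∀ s : ι → SignType, s ≠ 0 → LinearIndepOn ℝ v {j | s j = 0}) :
    nF (zonotope p v) i = #{s | S s ∧ #{j | s j = 0} = i} := by
  rw [nF_zonotope, ← Set.ncard_coe_finset]
  congr 1
  ext s
  simp only [mem_ofPred_eq, Finset.coe_filter, Finset.mem_univ, true_and, ← hS, and_assoc]
  refine and_congr_right fun _ => and_congr_right fun hs => ?_
  rw [finrank_span_image_eq_ncard (hli s hs), Set.ncard_eq_toFinset_card', toFinset_ofPred]

end Zonotope

section LinearIndependent

variable {ι E : Type*} [AddCommGroup E] [Module ℝ E] {v : ι → E}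

theorem covectors_eq_univ [Finite ι] (hv : LinearIndependent ℝ v) : covectors v = univ := by
  have := Fintype.ofFinite ι
  refine eq_univ_of_forall fun s => mem_covectors_iff.2
    ⟨fun j => s j, fun j => sign_coe_signType (s j), ?_⟩
  simp [LinearMap.ker_eq_bot.2 hv.fintypeLinearCombination_injective]

theorem nF_zonotope_of_linearIndependent [Fintype ι] [DecidableEq ι] (hv : LinearIndependent ℝ v)
    (p : E) (i : ℕ) :
    nF (zonotope p v) i = #{s : ι → SignType | s ≠ 0 ∧ #{j | s j = 0} = i} :=
  nF_zonotope_eq_card p i (by simp [covectors_eq_univ hv]) fun _ _ => hv.linearIndepOn _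

end LinearIndependent

section PositiveCircuit

variable {ι E : Type*} [AddCommGroup E] [Module ℝ E]

/-- A mixed sign vector is one with both a positive and a negative entry; these are the nonzero
covectors of a positive circuit. -/
def IsMixed (s : ι → SignType) : Prop := (∃ j, s j = 1) ∧ ∃ j, s j = -1

theorem ne_zero_iff_exists_eq_one_or_exists_eq_neg_one {s : ι → SignType} :
    s ≠ 0 ↔ (∃ j, s j = 1) ∨ ∃ j, s j = -1 := by
  rw [← exists_or, Function.ne_iff]
  refine exists_congr fun j => ?_
  rcases SignType.trichotomy (s j) with h | h | h <;> simp [h]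

theorem IsMixed.ne_zero {s : ι → SignType} (h : IsMixed s) : s ≠ 0 :=
  ne_zero_iff_exists_eq_one_or_exists_eq_neg_one.2 (.inl h.1)

variable [Fintype ι]

instance (s : ι → SignType) : Decidable (IsMixed s) :=
  inferInstanceAs (Decidable (_ ∧ _))

/-- The family `v` is a positive circuit with weights `w`: up to scaling, `∑ j, w j • v j = 0` is
its only linear relation, and the weights are positive. The empty family is allowed. -/
structure IsPositiveCircuit (v : ι → E) (w : ι → ℝ) : Prop where
  pos : ∀ j, 0 < w j
  ker_eq : LinearMap.ker (Fintype.linearCombination ℝ v) = Submodule.span ℝ {w}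

variable {v : ι → E} {w : ι → ℝ}

theorem isMixed_of_sum_mul_eq_zero {a : ι → ℝ} {s : ι → SignType} (hw : ∀ j, 0 < w j)
    (hs : s ≠ 0) (ha : ∀ j, sign (a j) = s j) (hsum : ∑ j, w j * a j = 0) : IsMixed s := by
  obtain ⟨j, hj⟩ := Function.ne_iff.1 hs
  have haj : a j ≠ 0 := by rwa [← sign_ne_zero, ha]
  have hne : w j * a j ≠ 0 := mul_ne_zero (hw j).ne' haj
  obtain ⟨k, -, hk⟩ := Finset.exists_pos_of_sum_zero_of_exists_nonzero _ hsum
    ⟨j, Finset.mem_univ j, hne⟩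
  obtain ⟨l, -, hl⟩ := Finset.exists_pos_of_sum_zero_of_exists_nonzero (fun j => -(w j * a j))
    (by simp [hsum]) ⟨j, Finset.mem_univ j, neg_ne_zero.2 hne⟩
  refine ⟨⟨k, ?_⟩, l, ?_⟩
  · rw [← ha, sign_eq_one_iff]
    exact pos_of_mul_pos_right hk (hw k).le
  · rw [← ha, sign_eq_neg_one_iff]
    exact neg_of_mul_neg_right (neg_pos.1 hl) (hw l).le

theorem IsMixed.exists_sum_mul_eq_zero {s : ι → SignType} (hs : IsMixed s) (hw : ∀ j, 0 < w j) :
    ∃ a : ι → ℝ, (∀ j, sign (a j) = s j) ∧ ∑ j, w j * a j = 0 := by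
  obtain ⟨⟨k, hk⟩, l, hl⟩ := hs
  -- Scaling each side by the total weight of the other balances the sum.
  let P := ∑ j with s j = 1, w j
  let N := ∑ j with s j = -1, w j
  have hP : 0 < P := Finset.sum_pos (fun j _ => hw j) ⟨k, by simpa using hk⟩
  have hN : 0 < N := Finset.sum_pos (fun j _ => hw j) ⟨l, by simpa using hl⟩
  refine ⟨fun j => (if s j = 1 then N else 0) - if s j = -1 then P else 0, fun j => ?_, ?_⟩
  · rcases SignType.trichotomy (s j) with h | h | h <;> simp [h, hP, hN]
  · calc ∑ j, w j * ((if s j = 1 then N else 0) - if s j = -1 then P else 0)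
      _ = P * N - N * P := by
        simp only [mul_sub, mul_ite, mul_zero, Finset.sum_sub_distrib, ← Finset.sum_filter,
          ← Finset.sum_mul, P, N]
      _ = 0 := by ring

namespace IsPositiveCircuit

theorem mem_covectors_iff (h : IsPositiveCircuit v w) {s : ι → SignType} :
    s ∈ covectors v ↔ ∃ a : ι → ℝ, (∀ j, sign (a j) = s j) ∧ ∑ j, w j * a j = 0 := by
  rw [_root_.mem_covectors_iff, h.ker_eq]
  refine exists_congr fun a => and_congr_right fun _ =>
    ⟨fun H => H w (Submodule.mem_span_singleton_self w), fun hsum x hx => ?_⟩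
  obtain ⟨t, rfl⟩ := Submodule.mem_span_singleton.1 hx
  simp [mul_assoc, ← Finset.mul_sum, hsum]

theorem mem_covectors_and_ne_zero_iff (h : IsPositiveCircuit v w) (s : ι → SignType) :
    s ∈ covectors v ∧ s ≠ 0 ↔ IsMixed s := by
  rw [h.mem_covectors_iff]
  constructor
  · rintro ⟨⟨a, ha, hsum⟩, hs⟩
    exact isMixed_of_sum_mul_eq_zero h.pos hs ha hsum
  · exact fun hs => ⟨hs.exists_sum_mul_eq_zero h.pos, hs.ne_zero⟩

theorem linearIndepOn_of_notMem (h : IsPositiveCircuit v w) {S : Set ι} {j : ι} (hj : j ∉ S) :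
    LinearIndepOn ℝ v S := by
  rw [linearIndepOn_iff]
  intro x hxS hx
  have x_mem_ker : ⇑x ∈ LinearMap.ker (Fintype.linearCombination ℝ v) := by
    rw [LinearMap.mem_ker, ← Finsupp.linearCombination_eq_fintype_linearCombination_apply]
    simpa using hx
  obtain ⟨t, ht⟩ := Submodule.mem_span_singleton.1 (h.ker_eq ▸ x_mem_ker)
  have xj : x j = 0 := by
    by_contra hne
    exact hj (hxS (Finsupp.mem_support_iff.2 hne))
  have t_eq : t = 0 := by simpa [xj, (h.pos j).ne'] using congrFun ht j
  exact DFunLike.coe_injective (by simp [← ht, t_eq])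

theorem nF_zonotope [DecidableEq ι] (h : IsPositiveCircuit v w) (p : E) (i : ℕ) :
    nF (zonotope p v) i = #{s : ι → SignType | IsMixed s ∧ #{j | s j = 0} = i} :=
  nF_zonotope_eq_card p i h.mem_covectors_and_ne_zero_iff fun _ hs =>
    have ⟨j, hj⟩ := Function.ne_iff.1 hs
    h.linearIndepOn_of_notMem (j := j) hj

end IsPositiveCircuit

end PositiveCircuit

section CubeAndZon

theorem cube_eq_zonotope (d : ℕ) : cube d = zonotope 0 fun j : Fin d => Pi.single j (1 : ℝ) := by
  ext y
  simp [cube, zonotope, ← pi_eq_sum_univ']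

theorem nF_cube (d i : ℕ) :
    nF (cube d) i = #{s : Fin d → SignType | s ≠ 0 ∧ #{j | s j = 0} = i} := by
  rw [cube_eq_zonotope,
    nF_zonotope_of_linearIndependent (Pi.linearIndependent_single_one (Fin d) ℝ)]

/-- The generators of `zon d` as a zonotope centered at `(1/2, …, 1/2)`. The first one is half of
the diagonal, with the sign for which the relation with the unit vectors is positive. -/
noncomputable def zonGen (d : ℕ) : Fin (d + 1) → Fin d → ℝ :=
  Fin.cons (fun _ => -(1 / 2)) fun j => Pi.single j 1

theorem sum_smul_zonGen {d : ℕ} (x : Fin (d + 1) → ℝ) :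
    ∑ j, x j • zonGen d j = fun k => x k.succ - x 0 / 2 := by
  ext k
  simp only [zonGen, Finset.sum_apply, Pi.smul_apply, smul_eq_mul, Fin.sum_univ_succ, Fin.cons_zero,
    Fin.cons_succ, Pi.single_apply, mul_ite, mul_one, mul_zero, Finset.sum_ite_eq, Finset.mem_univ,
    ↓reduceIte]
  ring

theorem isPositiveCircuit_zonGen (d : ℕ) :
    IsPositiveCircuit (zonGen d) (Fin.cons 2 fun _ => 1) where
  pos j := by cases j using Fin.cases <;> simp
  ker_eq := by
    ext x
    rw [LinearMap.mem_ker, Fintype.linearCombination_apply, sum_smul_zonGen,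
      Submodule.mem_span_singleton]
    constructor
    · intro hx
      refine ⟨x 0 / 2, funext fun j => ?_⟩
      cases j using Fin.cases with
      | zero => simp
      | succ k => simpa using (sub_eq_zero.1 (congrFun hx k)).symm
    · rintro ⟨t, rfl⟩
      ext k
      simp

theorem zon_eq_zonotope (d : ℕ) : zon d = zonotope (fun _ => 1 / 2) (zonGen d) := by
  ext y
  simp only [zon, zonotope, sum_smul_zonGen]
  constructor
  · rintro ⟨x, hx, t, ht₀, ht₁, rfl⟩
    refine ⟨Fin.cons (1 - 2 * t) x, ?_, ?_⟩
    · refine Fin.cases ?_ hx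
      rw [Fin.cons_zero, abs_le]
      constructor <;> linarith
    · ext k
      simp only [Pi.add_apply, Pi.smul_apply, smul_eq_mul, Fin.cons_succ, Fin.cons_zero]
      ring
  · rintro ⟨x, hx, rfl⟩
    have hx₀ := abs_le.1 (hx 0)
    refine ⟨Fin.tail x, fun k => hx k.succ, (1 - x 0) / 2, by linarith, by linarith, ?_⟩
    ext k
    simp only [Pi.add_apply, Pi.smul_apply, smul_eq_mul, Fin.tail]
    ring

theorem nF_zon (d i : ℕ) :
    nF (zon d) i = #{s : Fin (d + 1) → SignType | IsMixed s ∧ #{j | s j = 0} = i} := by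
  rw [zon_eq_zonotope, (isPositiveCircuit_zonGen d).nF_zonotope]

end CubeAndZon

section Recursion

theorem card_filter_eq_sum_card_filter_cons {d : ℕ} {α : Type*} [Fintype α]
    (p : (Fin (d + 1) → α) → Prop) [DecidablePred p] :
    #{s | p s} = ∑ a, #{s : Fin d → α | p (Fin.cons a s)} := by
  simp only [Finset.card_filter]
  rw [← (Fin.consEquiv fun _ => α).sum_comp, Fintype.sum_prod_type]
  rfl

theorem sum_univ_signType {M : Type*} [AddCommMonoid M] (f : SignType → M) :
    ∑ a, f a = f 0 + f (-1) + f 1 := by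
  simp [SignType.univ_eq, add_assoc]

theorem isMixed_cons_zero {d : ℕ} {s : Fin d → SignType} :
    IsMixed (Fin.cons 0 s : Fin (d + 1) → SignType) ↔ IsMixed s := by
  simp [IsMixed, Fin.exists_fin_succ]

theorem isMixed_cons_one {d : ℕ} {s : Fin d → SignType} :
    IsMixed (Fin.cons 1 s : Fin (d + 1) → SignType) ↔ ∃ j, s j = -1 := by
  simp [IsMixed, Fin.exists_fin_succ]

theorem isMixed_cons_neg_one {d : ℕ} {s : Fin d → SignType} :
    IsMixed (Fin.cons (-1) s : Fin (d + 1) → SignType) ↔ ∃ j, s j = 1 := by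
  simp [IsMixed, Fin.exists_fin_succ]

theorem card_isMixed_succ (d i : ℕ) :
    #{s : Fin (d + 1) → SignType | IsMixed s ∧ #{j | s j = 0} = i} =
      #{s : Fin d → SignType | s ≠ 0 ∧ #{j | s j = 0} = i} +
      #{s : Fin d → SignType | IsMixed s ∧ #{j | s j = 0} = i} +
      #{s : Fin d → SignType | IsMixed s ∧ #{j | s j = 0} + 1 = i} := by
  have inclusion_exclusion :
      #{s : Fin d → SignType | (∃ j, s j = 1) ∧ #{j | s j = 0} = i} +
        #{s : Fin d → SignType | (∃ j, s j = -1) ∧ #{j | s j = 0} = i} =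
      #{s : Fin d → SignType | s ≠ 0 ∧ #{j | s j = 0} = i} +
        #{s : Fin d → SignType | IsMixed s ∧ #{j | s j = 0} = i} := by
    rw [← Finset.card_union_add_card_inter, ← Finset.filter_or, ← Finset.filter_and]
    congr 2 <;> ext s <;>
      simp only [Finset.mem_filter_univ, ne_zero_iff_exists_eq_one_or_exists_eq_neg_one]
    · tauto
    · rw [IsMixed]
      tauto
  rw [← inclusion_exclusion, card_filter_eq_sum_card_filter_cons]
  simp only [sum_univ_signType, isMixed_cons_zero, isMixed_cons_one, isMixed_cons_neg_one,
    Fin.card_filter_univ_succ, Fin.cons_zero, Fin.cons_succ, ↓reduceIte, one_ne_zero,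
    SignType.neg_eq_zero_iff]
  ring

theorem nF_zon_succ_zero (d : ℕ) :
    nF (zon (d + 1)) 0 = nF (cube (d + 1)) 0 + nF (zon d) 0 := by
  simp [nF_zon, nF_cube, card_isMixed_succ, -Finset.card_eq_zero]

theorem nF_zon_succ_succ (d i : ℕ) :
    nF (zon (d + 1)) (i + 1) =
      nF (cube (d + 1)) (i + 1) + nF (zon d) (i + 1) + nF (zon d) i := by
  simp only [nF_zon, nF_cube, card_isMixed_succ, Nat.add_right_cancel_iff]

end Recursion

/-- The $f$-vector of the basis polytope $Q_n = [-1,1]^{n-1} + [0,(1,\dots,1)]$ of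
the $n$-cube satisfies $f_{Q_n,0} = f_{\square_{n-1},0} + f_{Q_{n-1},0}$ and
$f_{Q_n,i} = f_{\square_{n-1},i} + f_{Q_{n-1},i} + f_{Q_{n-1},i-1}$ for
$1 \le i \le n-2$, where $Q_{n-1} = [-1,1]^{n-2} + [0,(1,\dots,1)]$. -/
theorem fvector_cube_basis_polytope (n : ℕ) (hn : 2 ≤ n) :
    nF (zon (n - 1)) 0 = nF (cube (n - 1)) 0 + nF (zon (n - 2)) 0 ∧
    ∀ i : ℕ, 1 ≤ i → i ≤ n - 2 →
      nF (zon (n - 1)) i = nF (cube (n - 1)) i + nF (zon (n - 2)) i +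
        nF (zon (n - 2)) (i - 1) := by
  obtain ⟨d, rfl⟩ := Nat.exists_eq_add_of_le' hn
  refine ⟨nF_zon_succ_zero d, fun i hi _ => ?_⟩
  obtain ⟨k, rfl⟩ := Nat.exists_eq_add_of_le' hi
  exact nF_zon_succ_succ d k
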